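/- There exists a constant c > 0 independent of the mesh size h and the spline degree p such that for every tensor product spline u ∈ S^2 = S ⊗ S on Ω = (0,1)^2: c^{-1}|u|_{H^1(Ω)}^2 ≤ Σ_{α∈{0,1}^2} |Q_α u|_{H^1(Ω)}^2 ≤ c |u|_{H^1(Ω)}^2, and the analogous two-sided bound holds for the full H^1(Ω)-norm. That is, the L2-orthogonal splitting S^2 = S_{00} ⊕ S_{01} ⊕ S_{10} ⊕ S_{11} is H^1-stable uniformly in h and p. -/

import Mathlib

noncomputable section

open MeasureTheory Set

namespace SplineMG

/-- The `j`-th piece of the uniform partition of `[0,1]` into `m` subintervals of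
length `h = 1/m`; the first and last pieces are extended to `-∞` resp. `+∞`
(the spline is extended polynomially outside `[0,1]`). -/
def pieceSet (m j : ℕ) : Set ℝ :=
  (if j = 0 then Iic ((1 : ℝ) / m) else Icc ((j : ℝ) / m) (((j : ℝ) + 1) / m)) ∪
  (if j = m - 1 then Ici (((m : ℝ) - 1) / m) else ∅)

/-- `u : ℝ → ℝ` belongs to the univariate spline space `S` of degree `p` and maximal
smoothness `C^{p-1}` on the uniform partition of `(0,1)` into `m` intervals of
length `h = 1/m`. -/
def IsSpline (m p : ℕ) (u : ℝ → ℝ) : Prop :=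
  ContDiffOn ℝ (p - 1 : ℕ) u (Ioo (0 : ℝ) 1) ∧
  ∀ j < m, ∃ q : Polynomial ℝ, q.natDegree ≤ p ∧ ∀ x ∈ pieceSet m j, u x = q.eval x

/-- `u` belongs to the subspace `S₀` of `S`: all odd derivatives of order `< p`
vanish at both endpoints. -/
def IsSpline0 (m p : ℕ) (u : ℝ → ℝ) : Prop :=
  IsSpline m p u ∧
  ∀ l : ℕ, 2 * l + 1 < p →
    iteratedDeriv (2 * l + 1) u 0 = 0 ∧ iteratedDeriv (2 * l + 1) u 1 = 0

/-- The `L²(0,1)` inner product. -/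
def ip0 (u v : ℝ → ℝ) : ℝ := ∫ x in Ioo (0 : ℝ) 1, u x * v x

/-- The squared `L²(0,1)` norm `‖u‖₀²`. -/
def l2normSq (u : ℝ → ℝ) : ℝ := ∫ x in Ioo (0 : ℝ) 1, u x ^ 2

/-- The `L²(0,1)` norm `‖u‖₀`. -/
def l2norm (u : ℝ → ℝ) : ℝ := Real.sqrt (l2normSq u)

/-- The squared `H¹(0,1)` seminorm `|u|₁²`. -/
def h1semiSq (u : ℝ → ℝ) : ℝ := ∫ x in Ioo (0 : ℝ) 1, deriv u x ^ 2

/-- The `H¹(0,1)` seminorm `|u|₁`. -/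
def h1semi (u : ℝ → ℝ) : ℝ := Real.sqrt (h1semiSq u)

/-- The squared full `H¹(0,1)` norm. -/
def h1normSq (u : ℝ → ℝ) : ℝ := l2normSq u + h1semiSq u

/-- `u` belongs to `S₁`, the `L²(0,1)`-orthogonal complement of `S₀` in `S`. -/
def IsSpline1 (m p : ℕ) (u : ℝ → ℝ) : Prop :=
  IsSpline m p u ∧ ∀ v, IsSpline0 m p v → ip0 u v = 0

/-- `v = Q₀ u` is the `L²(0,1)`-orthogonal projection of `u` onto `S₀`. -/
def IsL2Proj0 (m p : ℕ) (u v : ℝ → ℝ) : Prop :=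
  IsSpline0 m p v ∧ ∀ w, IsSpline0 m p w → ip0 (u - v) w = 0

/-- The component predicate: `false ↦ S₀`, `true ↦ S₁`. -/
def IsSplineC (m p : ℕ) : Bool → (ℝ → ℝ) → Prop
  | false => IsSpline0 m p
  | true => IsSpline1 m p

/-- The tensor-product spline space `S^d = S ⊗ ⋯ ⊗ S` on `(0,1)^d`. -/
def TensorSpline (d m p : ℕ) : Submodule ℝ ((Fin d → ℝ) → ℝ) :=
  Submodule.span ℝ {u | ∃ f : Fin d → ℝ → ℝ, (∀ i, IsSpline m p (f i)) ∧
    u = fun x => ∏ i, f i (x i)}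

/-- The subspace `S_α = S_{α₁} ⊗ ⋯ ⊗ S_{α_d}` of `S^d`, for `α ∈ {0,1}^d`
(`false ↦ 0`, `true ↦ 1`). -/
def TensorSplineSub (d m p : ℕ) (α : Fin d → Bool) : Submodule ℝ ((Fin d → ℝ) → ℝ) :=
  Submodule.span ℝ {u | ∃ f : Fin d → ℝ → ℝ, (∀ i, IsSplineC m p (α i) (f i)) ∧
    u = fun x => ∏ i, f i (x i)}

/-- The open unit cube `Ω = (0,1)^d`. -/
def cube (d : ℕ) : Set (Fin d → ℝ) := Set.univ.pi fun _ => Ioo (0 : ℝ) 1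

/-- The `i`-th partial derivative. -/
def pd (d : ℕ) (i : Fin d) (u : (Fin d → ℝ) → ℝ) : (Fin d → ℝ) → ℝ :=
  fun x => deriv (fun t => u (Function.update x i t)) (x i)

/-- The `L²(Ω)` inner product on the unit cube. -/
def ipd (d : ℕ) (u v : (Fin d → ℝ) → ℝ) : ℝ := ∫ x in cube d, u x * v x

/-- The squared `L²(Ω)` norm. -/
def l2normSqD (d : ℕ) (u : (Fin d → ℝ) → ℝ) : ℝ := ∫ x in cube d, u x ^ 2

/-- The bilinear form `a(u,v) = ∫_Ω (∇u·∇v + uv) dx`. -/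
def aForm (d : ℕ) (u v : (Fin d → ℝ) → ℝ) : ℝ :=
  ∫ x in cube d, (∑ i, pd d i u x * pd d i v x) + u x * v x

/-- The squared `H¹(Ω)` seminorm. -/
def h1semiSqD (d : ℕ) (u : (Fin d → ℝ) → ℝ) : ℝ :=
  ∫ x in cube d, ∑ i, pd d i u x ^ 2

/-- The squared full `H¹(Ω)` norm. -/
def h1normSqD (d : ℕ) (u : (Fin d → ℝ) → ℝ) : ℝ := l2normSqD d u + h1semiSqD d u

/-- `v = Q_α u` is the `L²(Ω)`-orthogonal projection of `u` onto `S_α`. -/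
def IsL2ProjSub (d m p : ℕ) (α : Fin d → Bool) (u v : (Fin d → ℝ) → ℝ) : Prop :=
  v ∈ TensorSplineSub d m p α ∧ ∀ w ∈ TensorSplineSub d m p α, ipd d (u - v) w = 0

/-- The coarse tensor-product spline space `(S_c)^d` (with `m/2` knot spans of
width `2h` per direction). -/
def TensorSplineCoarse (d m p : ℕ) : Submodule ℝ ((Fin d → ℝ) → ℝ) :=
  TensorSpline d (m / 2) p

/-- `v = T_c u` is the `a(·,·)`-orthogonal (Galerkin) projection of `u` onto `(S_c)^d`. -/
def IsGalerkinCoarseProj (d m p : ℕ) (u v : (Fin d → ℝ) → ℝ) : Prop :=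
  v ∈ TensorSplineCoarse d m p ∧ ∀ w ∈ TensorSplineCoarse d m p, aForm d (u - v) w = 0

end SplineMG

namespace SplineMG

open Polynomial in
theorem exists_prim (q : ℝ[X]) : ∃ P : ℝ[X], derivative P = q := by
  induction q using Polynomial.induction_on' with
  | add p q hp hq =>
    obtain ⟨P, rfl⟩ := hp
    obtain ⟨Q, rfl⟩ := hq
    exact ⟨P + Q, by simp⟩
  | monomial n a =>
    refine ⟨monomial (n + 1) (a / (n + 1)), ?_⟩
    rw [derivative_monomial]
    have : (n : ℝ) + 1 ≠ 0 := by positivity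
    push_cast
    congr 1
    · field_simp

/-- Piecewise polynomials on `n+1` pieces. -/
abbrev PP (n : ℕ) : Type := Fin (n + 1) → Polynomial ℝ

/-- knots -/
def kn (n : ℕ) (j : ℕ) : ℝ := (j : ℝ) / ((n : ℝ) + 1)

theorem kn_zero (n : ℕ) : kn n 0 = 0 := by simp [kn]
theorem kn_last (n : ℕ) : kn n (n + 1) = 1 := by
  have : (n : ℝ) + 1 ≠ 0 := by positivity
  simp [kn, this]
theorem kn_succ (n j : ℕ) : kn n (j + 1) = kn n j + 1 / ((n : ℝ) + 1) := by
  simp [kn]; ring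
theorem kn_lt (n j : ℕ) : kn n j < kn n (j + 1) := by
  rw [kn_succ]
  have : 0 < 1 / ((n : ℝ) + 1) := by positivity
  linarith

/-- inner product -/
def ipp {n : ℕ} (f g : PP n) : ℝ :=
  ∑ j : Fin (n + 1), ∫ t in (kn n j)..(kn n (j + 1)), (f j).eval t * (g j).eval t

theorem pint (q : Polynomial ℝ) (a b : ℝ) : IntervalIntegrable (fun t => q.eval t) volume a b :=
  (Polynomial.continuous q).intervalIntegrable a b

theorem pint2 (q r : Polynomial ℝ) (a b : ℝ) :
    IntervalIntegrable (fun t => q.eval t * r.eval t) volume a b :=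
  ((Polynomial.continuous q).mul (Polynomial.continuous r)).intervalIntegrable a b

theorem poly_sq_zero (q : Polynomial ℝ) {a b : ℝ} (hab : a < b)
    (h : ∫ t in a..b, q.eval t * q.eval t = 0) : q = 0 := by
  by_contra hq
  have hne : ∃ c ∈ Ioo a b, q.eval c ≠ 0 := by
    by_contra hc
    push Not at hc
    apply hq
    apply Polynomial.eq_zero_of_infinite_isRoot
    exact (Ioo_infinite hab).mono (fun x hx => hc x hx)
  obtain ⟨c, hc, hc0⟩ := hne
  have := intervalIntegral.integral_pos hab
    (f := fun t => q.eval t * q.eval t)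
    ((Polynomial.continuous q).mul (Polynomial.continuous q)).continuousOn
    (fun x _ => mul_self_nonneg _) ⟨c, Ioo_subset_Icc_self hc, mul_self_pos.mpr hc0⟩
  linarith

@[reducible] def PPcore (n : ℕ) : InnerProductSpace.Core ℝ (PP n) where
  inner f g := ipp f g
  conj_inner_symm f g := by
    simp [ipp, mul_comm]
  re_inner_nonneg f := by
    simp only [ipp, RCLike.re_to_real]
    refine Finset.sum_nonneg fun j _ => ?_
    exact intervalIntegral.integral_nonneg (kn_lt n j).le (fun x _ => mul_self_nonneg _)
  add_left f g k := by
    simp only [ipp, ← Finset.sum_add_distrib]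
    refine Finset.sum_congr rfl fun j _ => ?_
    rw [← intervalIntegral.integral_add (pint2 _ _ _ _) (pint2 _ _ _ _)]
    simp [add_mul]
  smul_left f g r := by
    simp only [ipp, Finset.mul_sum]
    refine Finset.sum_congr rfl fun j _ => ?_
    simp [mul_assoc]
  definite f h := by
    have h' : ∑ j : Fin (n + 1), ∫ t in (kn n j)..(kn n (j + 1)), (f j).eval t * (f j).eval t = 0 := h
    rw [Finset.sum_eq_zero_iff_of_nonneg] at h'
    · funext j
      exact poly_sq_zero _ (kn_lt n j) (h' j (Finset.mem_univ _))
    · intro j _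
      exact intervalIntegral.integral_nonneg (kn_lt n j).le (fun x _ => mul_self_nonneg _)

instance (n : ℕ) : NormedAddCommGroup (PP n) := @InnerProductSpace.Core.toNormedAddCommGroup ℝ (PP n) _ _ _ (PPcore n)
instance (n : ℕ) : InnerProductSpace ℝ (PP n) := InnerProductSpace.ofCore (PPcore n).toCore

theorem inner_def {n : ℕ} (f g : PP n) : inner ℝ f g = ipp f g := rfl

/-- derivative -/
def dd (n : ℕ) : PP n →ₗ[ℝ] PP n where
  toFun f := fun j => Polynomial.derivative (f j)
  map_add' f g := by funext j; simp
  map_smul' c f := by funext j; simp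

@[simp] theorem dd_apply {n : ℕ} (f : PP n) (j : Fin (n + 1)) : dd n f j = Polynomial.derivative (f j) := rfl

def Cn {n : ℕ} (f : PP n) : Prop :=
  ∀ j : Fin n, (f j.castSucc).eval (kn n (j + 1)) = (f j.succ).eval (kn n (j + 1))

def b0 {n : ℕ} (f : PP n) : ℝ := (f 0).eval 0
def b1 {n : ℕ} (f : PP n) : ℝ := (f (Fin.last n)).eval 1

def one (n : ℕ) : PP n := fun _ => 1

theorem exists_primitive {n : ℕ} (f : PP n) : ∃ u : PP n, Cn u ∧ dd n u = f ∧ b0 u = 0 := by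
  let fe : ℕ → Polynomial ℝ := fun j => if h : j < n + 1 then f ⟨j, h⟩ else 0
  choose P hP using fun j => exists_prim (fe j)
  let G : ℕ → ℝ := fun j => ∑ i ∈ Finset.range j, ((P i).eval (kn n (i+1)) - (P i).eval (kn n i))
  refine ⟨fun j => P j - Polynomial.C ((P j).eval (kn n j)) + Polynomial.C (G j), ?_, ?_, ?_⟩
  · intro j
    have hG : G (j + 1) = G j + ((P j).eval (kn n (j+1)) - (P j).eval (kn n j)) := by
      simp only [G, Finset.sum_range_succ]
    simp only [Fin.val_castSucc, Fin.val_succ, hG, Polynomial.eval_add, Polynomial.eval_sub, Polynomial.eval_C]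
    ring
  · funext j
    simp [hP, fe]
    intro h; omega
  · simp [b0, G, kn_zero]

theorem sum_int_deriv {n : ℕ} (f : PP n) (hf : Cn f) :
    ∑ j : Fin (n + 1), ∫ t in (kn n j)..(kn n (j + 1)), (Polynomial.derivative (f j)).eval t
      = b1 f - b0 f := by
  have : ∀ j : Fin (n + 1), ∫ t in (kn n j)..(kn n (j + 1)), (Polynomial.derivative (f j)).eval t
     = (f j).eval (kn n (j+1)) - (f j).eval (kn n j) := by
    intro j
    exact intervalIntegral.integral_eq_sub_of_hasDerivAt (fun x _ => (f j).hasDerivAt x) (pint _ _ _)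
  simp_rw [this]
  rw [Finset.sum_sub_distrib, Fin.sum_univ_castSucc,
    Fin.sum_univ_succ (fun j : Fin (n+1) => (f j).eval (kn n j))]
  have h2 : ∀ j : Fin n, (f j.castSucc).eval (kn n ((j.castSucc : Fin (n+1)) + 1)) =
     (f j.succ).eval (kn n (j.succ : Fin (n+1))) := by
    intro j
    have := hf j
    simpa using this
  rw [Finset.sum_congr rfl (fun j _ => h2 j)]
  simp [b0, b1, kn_zero, kn_last]
  ring

theorem ibp {n : ℕ} (u v : PP n) (hu : Cn u) (hv : Cn v) :
    inner ℝ (dd n u) v + inner ℝ u (dd n v) = b1 u * b1 v - b0 u * b0 v := by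
  have h := sum_int_deriv (n := n) (fun j => u j * v j) (fun j => by simp [hu j, hv j])
  have e1 : b1 (n := n) (fun j => u j * v j) = b1 u * b1 v := by simp [b1]
  have e0 : b0 (n := n) (fun j => u j * v j) = b0 u * b0 v := by simp [b0]
  rw [e1, e0] at h
  rw [← h, inner_def, inner_def, ipp, ipp, ← Finset.sum_add_distrib]
  refine Finset.sum_congr rfl fun j _ => ?_
  rw [← intervalIntegral.integral_add (pint2 _ _ _ _) (pint2 _ _ _ _)]
  simp

theorem Cn_one (n : ℕ) : Cn (one n) := fun j => by simp [one]
theorem dd_one (n : ℕ) : dd n (one n) = 0 := by funext j; simp [one]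

theorem inner_dd_one {n : ℕ} (u : PP n) (hu : Cn u) : inner ℝ (dd n u) (one n) = b1 u - b0 u := by
  have := ibp u (one n) hu (Cn_one n)
  rw [dd_one, inner_zero_right] at this
  simpa [b1, b0, one] using this

theorem Cn.sub {n : ℕ} {u v : PP n} (hu : Cn u) (hv : Cn v) : Cn (u - v) := fun j => by
  simp [hu j, hv j]
theorem Cn.add {n : ℕ} {u v : PP n} (hu : Cn u) (hv : Cn v) : Cn (u + v) := fun j => by
  simp [hu j, hv j]
theorem Cn.smul {n : ℕ} {u : PP n} (hu : Cn u) (c : ℝ) : Cn (c • u) := fun j => by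
  simp [hu j]
def MM (n p : ℕ) : Submodule ℝ (PP n) where
  carrier := {f | (∀ j, (f j).natDegree ≤ p) ∧ ∀ i < p, Cn ((dd n ^ i) f)}
  zero_mem' := by
    refine ⟨fun j => by simp, fun i _ => ?_⟩
    rw [map_zero]; intro j; simp
  add_mem' := by
    intro f g hf hg
    refine ⟨fun j => ?_, fun i hi => ?_⟩
    · exact Polynomial.natDegree_add_le_of_degree_le (hf.1 j) (hg.1 j)
    · rw [map_add]; exact (hf.2 i hi).add (hg.2 i hi)
  smul_mem' := by
    intro c f hf
    refine ⟨fun j => ?_, fun i hi => ?_⟩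
    · exact (Polynomial.natDegree_smul_le _ _).trans (hf.1 j)
    · rw [map_smul]; exact (hf.2 i hi).smul c

theorem b0_add {n : ℕ} (f g : PP n) : b0 (f + g) = b0 f + b0 g := by simp [b0]
theorem b1_add {n : ℕ} (f g : PP n) : b1 (f + g) = b1 f + b1 g := by simp [b1]
theorem b0_sub {n : ℕ} (f g : PP n) : b0 (f - g) = b0 f - b0 g := by simp [b0]
theorem b1_sub {n : ℕ} (f g : PP n) : b1 (f - g) = b1 f - b1 g := by simp [b1]
theorem b0_smul {n : ℕ} (c : ℝ) (f : PP n) : b0 (c • f) = c * b0 f := by simp [b0]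
theorem b1_smul {n : ℕ} (c : ℝ) (f : PP n) : b1 (c • f) = c * b1 f := by simp [b1]

def BB (n r p : ℕ) : Submodule ℝ (PP n) where
  carrier := {f | ∀ i < p, Odd (i + r) → b0 ((dd n ^ i) f) = 0 ∧ b1 ((dd n ^ i) f) = 0}
  zero_mem' := by
    intro i _ _
    rw [map_zero]; simp [b0, b1]
  add_mem' := by
    intro f g hf hg i hi hr
    have h1 := hf i hi hr
    have h2 := hg i hi hr
    rw [map_add, b0_add, b1_add, h1.1, h1.2, h2.1, h2.2]; simp
  smul_mem' := by
    intro c f hf i hi hr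
    have h1 := hf i hi hr
    rw [map_smul, b0_smul, b1_smul, h1.1, h1.2]; simp

def sp (n r p : ℕ) : Submodule ℝ (PP n) := MM n p ⊓ BB n r p

instance MM_fd (n p : ℕ) : FiniteDimensional ℝ (MM n p) := by
  let L : MM n p →ₗ[ℝ] (Fin (n + 1) → Fin (p + 1) → ℝ) :=
    { toFun := fun f j i => (f.1 j).coeff i
      map_add' := by intro f g; funext j i; simp
      map_smul' := by intro f g; funext j i; simp }
  apply FiniteDimensional.of_injective L
  intro f g h
  apply Subtype.ext
  funext j
  ext i
  by_cases hi : i < p + 1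
  · exact congrFun (congrFun h j) ⟨i, hi⟩
  · rw [Polynomial.coeff_eq_zero_of_natDegree_lt, Polynomial.coeff_eq_zero_of_natDegree_lt]
    · exact lt_of_le_of_lt (g.2.1 j) (by omega)
    · exact lt_of_le_of_lt (f.2.1 j) (by omega)

instance sp_fd (n r p : ℕ) : FiniteDimensional ℝ (sp n r p) :=
  Submodule.finiteDimensional_of_le (inf_le_left : sp n r p ≤ MM n p)

theorem pow_succ_dd (n i : ℕ) (f : PP n) : (dd n ^ (i + 1)) f = (dd n ^ i) (dd n f) := by
  rw [pow_succ]; rfl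

theorem natDegree_prim {P : Polynomial ℝ} {p : ℕ} (h : (Polynomial.derivative P).natDegree ≤ p) :
    P.natDegree ≤ p + 1 := by
  rw [Polynomial.natDegree_le_iff_coeff_eq_zero] at h ⊢
  intro N hN
  obtain ⟨k, rfl⟩ : ∃ k, N = k + 1 := ⟨N - 1, by omega⟩
  have := h k (by omega)
  rw [Polynomial.coeff_derivative] at this
  have hk : (k : ℝ) + 1 ≠ 0 := by positivity
  simpa [hk] using this

theorem sp_succ {n r p : ℕ} {u : PP n} (hu : Cn u) (hb : Odd r → b0 u = 0 ∧ b1 u = 0)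
    (hd : dd n u ∈ sp n (r + 1) p) : u ∈ sp n r (p + 1) := by
  refine ⟨⟨fun j => natDegree_prim (hd.1.1 j), fun i hi => ?_⟩, fun i hi hr => ?_⟩
  · cases i with
    | zero => simpa using hu
    | succ i => rw [pow_succ_dd]; exact hd.1.2 i (by omega)
  · cases i with
    | zero => simpa using hb (by simpa using hr)
    | succ i =>
      rw [pow_succ_dd]
      exact hd.2 i (by omega) (by convert hr using 1; ring)

theorem MM_dd {n p : ℕ} {u : PP n} (h : u ∈ MM n (p + 1)) : dd n u ∈ MM n p := by
  refine ⟨fun j => ?_, fun i hi => ?_⟩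
  · have := Polynomial.natDegree_derivative_le (u j)
    have h2 := h.1 j
    simp only [dd_apply]
    omega
  · rw [← pow_succ_dd]; exact h.2 (i + 1) (by omega)

theorem MM_Cn {n p : ℕ} (hp : 1 ≤ p) {u : PP n} (h : u ∈ MM n p) : Cn u := by
  simpa using h.2 0 (by omega)

theorem sp_dd {n r p : ℕ} {u : PP n} (h : u ∈ sp n r (p + 1)) : dd n u ∈ sp n (r + 1) p := by
  refine ⟨MM_dd h.1, fun i hi hr => ?_⟩
  rw [← pow_succ_dd]
  exact h.2 (i + 1) (by omega) (by convert hr using 1; ring)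

theorem sp_bd {n r p : ℕ} {u : PP n} (h : u ∈ sp n r (p + 1)) (hr : Odd r) : b0 u = 0 ∧ b1 u = 0 := by
  simpa using h.2 0 (by omega) (by simpa using hr)

theorem sp_two {n r p : ℕ} : sp n (r + 2) p = sp n r p := by
  have : BB n (r + 2) p = BB n r p := by
    ext f
    refine forall_congr' fun i => forall_congr' fun _ => ?_
    have : Odd (i + (r + 2)) ↔ Odd (i + r) := by
      rw [← add_assoc]; simp [Nat.odd_add]
    rw [this]
  rw [sp, sp, this]

theorem one_mem_sp {n r p : ℕ} (hr : Even r) : one n ∈ sp n r p := by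
  have hz : ∀ i, (dd n ^ (i + 1)) (one n) = 0 := by
    intro i; rw [pow_succ_dd, dd_one, map_zero]
  refine ⟨⟨fun j => by simp [one], fun i hi => ?_⟩, fun i hi hr' => ?_⟩
  · cases i with
    | zero => simpa using Cn_one n
    | succ i => rw [hz]; intro j; simp
  · cases i with
    | zero => simp at hr'; exact absurd hr (Nat.not_even_iff_odd.mpr hr')
    | succ i => rw [hz]; simp [b0, b1]

theorem cs_int (f : Polynomial ℝ) {a b : ℝ} (hab : a ≤ b) :
    (∫ t in a..b, f.eval t) ^ 2 ≤ (b - a) * ∫ t in a..b, f.eval t * f.eval t := by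
  rcases hab.eq_or_lt with rfl | hab
  · simp
  set I := ∫ t in a..b, f.eval t
  set c := I / (b - a) with hc
  have hpos : 0 < b - a := by linarith
  have h0 : 0 ≤ ∫ t in a..b, (f.eval t - c) ^ 2 :=
    intervalIntegral.integral_nonneg hab.le (fun x _ => sq_nonneg _)
  have h1 : ∫ t in a..b, (f.eval t - c) ^ 2 =
      (∫ t in a..b, f.eval t * f.eval t) - (2 * c) * I + c ^ 2 * (b - a) := by
    have : ∀ t, (f.eval t - c) ^ 2 = f.eval t * f.eval t - (2 * c) * f.eval t + c ^ 2 := fun t => by ring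
    simp_rw [this]
    rw [intervalIntegral.integral_add, intervalIntegral.integral_sub, intervalIntegral.integral_const_mul,
      intervalIntegral.integral_const]
    · simp [mul_comm, I]
    · exact pint2 _ _ _ _
    · exact (pint _ _ _).const_mul _
    · exact (pint2 _ _ _ _).sub ((pint _ _ _).const_mul _)
    · simp
  rw [h1] at h0
  have hI : I = c * (b - a) := by rw [hc]; field_simp
  rw [hI] at h0 ⊢
  nlinarith

theorem norm_sq_def {n : ℕ} (f : PP n) : ‖f‖ ^ 2 =
    ∑ j : Fin (n + 1), ∫ t in (kn n j)..(kn n (j + 1)), (f j).eval t * (f j).eval t := by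
  rw [← real_inner_self_eq_norm_sq]; rfl

def hh (n : ℕ) : ℝ := 1 / ((n : ℝ) + 1)
theorem hh_pos (n : ℕ) : 0 < hh n := by unfold hh; positivity

theorem approx_base {n r : ℕ} (u : PP n) : ∃ v ∈ sp n r 0, ‖u - v‖ ≤ hh n * ‖dd n u‖ := by
  refine ⟨fun j => Polynomial.C ((u j).eval (kn n j)), ⟨⟨fun j => by simp, fun i hi => by omega⟩,
    fun i hi => by omega⟩, ?_⟩
  have hh0 := hh_pos n
  refine le_of_sq_le_sq ?_ (by positivity)
  rw [mul_pow, norm_sq_def, norm_sq_def, Finset.mul_sum]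
  refine Finset.sum_le_sum fun j _ => ?_
  set a := kn n j
  set b := kn n (j + 1)
  have hab : b = a + hh n := kn_succ n j
  set I := ∫ t in a..b, (dd n u j).eval t * (dd n u j).eval t
  have key : ∀ t ∈ Icc a b, (u j - Polynomial.C ((u j).eval a)).eval t *
      (u j - Polynomial.C ((u j).eval a)).eval t ≤ hh n * I := by
    intro t ht
    have h1 : (u j - Polynomial.C ((u j).eval a)).eval t = ∫ s in a..t, (dd n u j).eval s := by
      rw [dd_apply, intervalIntegral.integral_eq_sub_of_hasDerivAt (fun x _ => (u j).hasDerivAt x) (pint _ _ _)]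
      simp
    rw [h1, ← sq]
    refine (cs_int _ ht.1).trans ?_
    have h2 : ∫ s in a..t, (dd n u j).eval s * (dd n u j).eval s ≤ I := by
      apply intervalIntegral.integral_mono_interval le_rfl ht.1 ht.2
      · exact Filter.Eventually.of_forall fun x => mul_self_nonneg _
      · exact pint2 _ _ _ _
    have h3 : 0 ≤ ∫ s in a..t, (dd n u j).eval s * (dd n u j).eval s :=
      intervalIntegral.integral_nonneg ht.1 (fun x _ => mul_self_nonneg _)
    have : t - a ≤ hh n := by linarith [ht.2]
    exact mul_le_mul this h2 h3 hh0.le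
  calc _ ≤ ∫ t in a..b, hh n * I :=
        intervalIntegral.integral_mono_on (by linarith) (pint2 _ _ _ _) (by simp) key
    _ = hh n ^ 2 * I := by
        rw [intervalIntegral.integral_const, hab]; simp; ring

theorem approx_step {n r p : ℕ}
    (ih : ∀ u : PP n, Cn u → (Odd (r + 1) → b0 u = 0 ∧ b1 u = 0) →
      ∃ v ∈ sp n (r + 1) p, ‖u - v‖ ≤ hh n * ‖dd n u‖)
    (u : PP n) (hu : Cn u) (hb : Odd r → b0 u = 0 ∧ b1 u = 0) :
    ∃ v ∈ sp n r (p + 1), ‖u - v‖ ≤ hh n * ‖dd n u‖ ∧ ‖dd n v‖ ≤ ‖dd n u‖ := by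
  set W := sp n (r + 1) p with hW
  set w := W.starProjection (dd n u) with hw
  have hwm : w ∈ W := Submodule.starProjection_apply_mem _ _
  have hworth : ∀ z ∈ W, inner ℝ (dd n u - w) z = 0 := fun z hz =>
    Submodule.starProjection_inner_eq_zero _ _ hz
  have hwn : ‖w‖ ≤ ‖dd n u‖ := Submodule.norm_starProjection_apply_le _ _
  have hgn : ‖dd n u - w‖ ≤ ‖dd n u‖ := by
    have := Submodule.norm_starProjection_apply_le Wᗮ (dd n u)
    rwa [Submodule.starProjection_orthogonal_val] at this
  obtain ⟨v0, hv0C, hv0d, hv00⟩ := exists_primitive w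
  -- choose the right primitive
  obtain ⟨v, hvC, hvd, hvb, hcase⟩ : ∃ v : PP n, Cn v ∧ dd n v = w ∧
      (Odd r → b0 v = 0 ∧ b1 v = 0) ∧ (¬ Odd r → inner ℝ (u - v) (one n) = 0) := by
    by_cases hr : Odd r
    · refine ⟨v0, hv0C, hv0d, fun _ => ⟨hv00, ?_⟩, fun h => absurd hr h⟩
      have h1 := inner_dd_one v0 hv0C
      have h2 := inner_dd_one u hu
      have h3 := hworth (one n) (one_mem_sp (by exact Odd.add_one hr))
      rw [inner_sub_left, h2, (hb hr).1, (hb hr).2, ← hv0d, h1, hv00] at h3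
      linarith
    · have h1 : inner ℝ (one n) (one n) ≠ 0 := by
        rw [inner_self_ne_zero]
        intro h
        have := congrFun h 0
        simp [one] at this
      refine ⟨v0 + (inner ℝ (u - v0) (one n) / inner ℝ (one n) (one n)) • one n,
        hv0C.add ((Cn_one n).smul _), ?_, fun h => absurd h hr, fun _ => ?_⟩
      · rw [map_add, map_smul, dd_one, smul_zero, add_zero, hv0d]
      · rw [← sub_sub, inner_sub_left, real_inner_smul_left]
        field_simp
        ring
  refine ⟨v, sp_succ hvC hvb (hvd ▸ hwm), ?_, by rw [hvd]; exact hwn⟩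
  set g := u - v with hg
  have hgC : Cn g := hu.sub hvC
  have hgd : dd n g = dd n u - w := by rw [hg, map_sub, hvd]
  obtain ⟨φ, hφC, hφd, hφ0⟩ := exists_primitive g
  have hφ1 := inner_dd_one φ hφC
  obtain ⟨ψ, hψ, hψn⟩ := ih φ hφC (fun hr1 => by
    have : ¬ Odd r := by
      intro h; exact (Nat.not_odd_iff_even.mpr (Odd.add_one h)) hr1
    have h2 := hcase this
    rw [hφd, h2, hφ0] at hφ1
    exact ⟨hφ0, by linarith⟩)
  have hib := ibp g φ hgC hφC
  have hbd : b1 g * b1 φ - b0 g * b0 φ = 0 := by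
    by_cases hr : Odd r
    · rw [hg, b1_sub, b0_sub, (hb hr).1, (hb hr).2, (hvb hr).1, (hvb hr).2]; ring
    · have h2 := hcase hr
      rw [hφd, h2, hφ0] at hφ1
      rw [hφ0, show b1 φ = 0 by linarith]; ring
  rw [hbd, hφd, hgd, real_inner_self_eq_norm_sq] at hib
  have h3 := hworth ψ hψ
  have h4 : ‖g‖ ^ 2 = - inner ℝ (dd n u - w) (φ - ψ) := by
    rw [inner_sub_right, h3]; linarith
  have h5 := abs_real_inner_le_norm (dd n u - w) (φ - ψ)
  have h6 := neg_le_of_abs_le h5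
  rw [hφd] at hψn
  have hh0 := hh_pos n
  have h7 : ‖dd n u - w‖ * ‖φ - ψ‖ ≤ ‖dd n u‖ * (hh n * ‖g‖) :=
    mul_le_mul hgn hψn (norm_nonneg _) (norm_nonneg _)
  rcases (norm_nonneg g).eq_or_lt with h0 | h0
  · rw [← h0]; positivity
  · have : ‖g‖ * ‖g‖ ≤ (hh n * ‖dd n u‖) * ‖g‖ := by nlinarith
    exact le_of_mul_le_mul_right this h0

theorem approx {n : ℕ} (p : ℕ) : ∀ (r : ℕ) (u : PP n), Cn u → (Odd r → b0 u = 0 ∧ b1 u = 0) →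
      ∃ v ∈ sp n r p, ‖u - v‖ ≤ hh n * ‖dd n u‖ := by
  induction p with
  | zero => intro r u _ _; exact approx_base u
  | succ p ih =>
    intro r u hu hb
    obtain ⟨v, h1, h2, _⟩ := approx_step (ih (r + 1)) u hu hb
    exact ⟨v, h1, h2⟩

theorem inv_base {n : ℕ} {u : PP n} (h : ∀ j, (u j).natDegree ≤ 1) : hh n * ‖dd n u‖ ≤ 4 * ‖u‖ := by
  have hh0 := hh_pos n
  refine le_of_sq_le_sq ?_ (by positivity)
  rw [mul_pow, mul_pow, norm_sq_def, norm_sq_def, Finset.mul_sum, Finset.mul_sum]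
  refine Finset.sum_le_sum fun j _ => ?_
  set s := kn n j
  set e := kn n (j + 1)
  have hab : e = s + hh n := kn_succ n j
  obtain ⟨b, a, hq⟩ := Polynomial.exists_eq_X_add_C_of_natDegree_le_one (h j)
  rw [dd_apply, hq]
  have h1 : ∫ t in s..e, (Polynomial.C b * Polynomial.X + Polynomial.C a).eval t *
      (Polynomial.C b * Polynomial.X + Polynomial.C a).eval t =
      (b ^ 2 * e ^ 3 / 3 + a * b * e ^ 2 + a ^ 2 * e) - (b ^ 2 * s ^ 3 / 3 + a * b * s ^ 2 + a ^ 2 * s) := by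
    refine intervalIntegral.integral_eq_sub_of_hasDerivAt
      (f := fun t => b ^ 2 * t ^ 3 / 3 + a * b * t ^ 2 + a ^ 2 * t) (fun x _ => ?_) (pint2 _ _ _ _)
    have h3 := (((hasDerivAt_pow 3 x).const_mul (b ^ 2)).div_const 3).add
      (((hasDerivAt_pow 2 x).const_mul (a * b))) |>.add ((hasDerivAt_id x).const_mul (a ^ 2))
    refine (h3.congr_deriv ?_)
    simp
    ring
  rw [h1, hab]
  simp
  have : 0 ≤ (a + b * (s + hh n / 2)) ^ 2 * hh n := by positivity
  have : 0 ≤ b ^ 2 * hh n ^ 3 := by positivity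
  nlinarith

theorem inverse {n : ℕ} (p : ℕ) : ∀ (r : ℕ) (u : PP n), u ∈ sp n r (p + 1) →
    hh n * ‖dd n u‖ ≤ 4 * ‖u‖ := by
  induction p with
  | zero => intro r u hu; exact inv_base hu.1.1
  | succ p ih =>
    intro r u hu
    have hd := sp_dd hu
    have h1 := ih _ _ hd
    have hib := ibp u (dd n u) (MM_Cn (by omega) hu.1) (MM_Cn (by omega) hd.1)
    have hbd : b1 u * b1 (dd n u) - b0 u * b0 (dd n u) = 0 := by
      by_cases hr : Odd r
      · rw [(sp_bd hu hr).1, (sp_bd hu hr).2]; ring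
      · have : Odd (r + 1) := (Nat.not_odd_iff_even.mp hr).add_one
        rw [(sp_bd hd this).1, (sp_bd hd this).2]; ring
    rw [hbd, real_inner_self_eq_norm_sq] at hib
    have h6 := neg_le_of_abs_le (abs_real_inner_le_norm u (dd n (dd n u)))
    have hh0 := hh_pos n
    rcases (norm_nonneg (dd n u)).eq_or_lt with h0 | h0
    · rw [← h0]; simp
    · have h7 : ‖dd n u‖ * ‖dd n u‖ ≤ ‖u‖ * ‖dd n (dd n u)‖ := by nlinarith
      have h8 : (hh n * ‖dd n u‖) * ‖dd n u‖ ≤ (4 * ‖u‖) * ‖dd n u‖ := by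
        nlinarith [norm_nonneg u]
      exact le_of_mul_le_mul_right h8 h0

/-- The L2 projector onto S_0. -/
def Q0 (n p : ℕ) : PP n →ₗ[ℝ] PP n := ((sp n 0 p).starProjection : PP n →L[ℝ] PP n).toLinearMap

theorem Q0_apply (n p : ℕ) (f : PP n) : Q0 n p f = (sp n 0 p).starProjection f := rfl
theorem Q0_mem (n p : ℕ) (f : PP n) : Q0 n p f ∈ sp n 0 p := Submodule.starProjection_apply_mem _ _
theorem Q0_orth (n p : ℕ) (f g : PP n) (hg : g ∈ sp n 0 p) : inner ℝ (f - Q0 n p f) g = 0 :=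
  Submodule.starProjection_inner_eq_zero _ _ hg
theorem Q0_norm (n p : ℕ) (f : PP n) : ‖Q0 n p f‖ ≤ ‖f‖ := Submodule.norm_starProjection_apply_le _ _
theorem Q1_norm (n p : ℕ) (f : PP n) : ‖f - Q0 n p f‖ ≤ ‖f‖ := by
  have := Submodule.norm_starProjection_apply_le (sp n 0 p)ᗮ f
  rwa [Submodule.starProjection_orthogonal_val] at this

theorem Q0_stable {n p : ℕ} (hp : 1 ≤ p) {u : PP n} (hu : u ∈ MM n p) :
    ‖dd n (Q0 n p u)‖ ≤ 5 * ‖dd n u‖ := by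
  obtain ⟨p, rfl⟩ : ∃ k, p = k + 1 := ⟨p - 1, by omega⟩
  obtain ⟨v, hv, h1, h2⟩ := approx_step (r := 0) (approx p 1) u (MM_Cn hp hu) (by simp)
  have e : Q0 n (p + 1) u - v = Q0 n (p + 1) (u - v) := by
    have hv' : Q0 n (p + 1) v = v := Submodule.starProjection_eq_self_iff.mpr hv
    rw [map_sub, hv']
  have h3 := inverse p 0 _ (Q0_mem n (p + 1) (u - v))
  have h4 := Q0_norm n (p + 1) (u - v)
  have h5 : Q0 n (p + 1) u = v + Q0 n (p + 1) (u - v) := by rw [← e]; abel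
  rw [h5, map_add]
  refine (norm_add_le _ _).trans ?_
  have hh0 := hh_pos n
  have h6 : hh n * ‖dd n (Q0 n (p + 1) (u - v))‖ ≤ hh n * (4 * ‖dd n u‖) := by linarith
  have := le_of_mul_le_mul_left h6 hh0
  linarith
def idx (n : ℕ) (x : ℝ) : Fin (n + 1) := ⟨min ⌊x * ((n : ℝ) + 1)⌋₊ n, by omega⟩

theorem kn_le_iff {n j : ℕ} {x : ℝ} : kn n j ≤ x ↔ (j : ℝ) ≤ x * ((n : ℝ) + 1) := by
  rw [kn, div_le_iff₀ (by positivity)]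
theorem lt_kn_iff {n j : ℕ} {x : ℝ} : x < kn n j ↔ x * ((n : ℝ) + 1) < (j : ℝ) := by
  rw [kn, lt_div_iff₀ (by positivity)]

theorem idx_spec (n : ℕ) (x : ℝ) : ((idx n x : ℕ) = 0 ∨ kn n (idx n x) ≤ x) ∧
    ((idx n x : ℕ) = n ∨ x < kn n (idx n x + 1)) := by
  simp only [idx]
  constructor
  · by_cases hx : 0 ≤ x * ((n : ℝ) + 1)
    · right
      rw [kn_le_iff]
      refine le_trans ?_ (Nat.floor_le hx)
      exact_mod_cast min_le_left _ _
    · left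
      rw [Nat.floor_of_nonpos (by linarith)]; simp
  · by_cases h : n ≤ ⌊x * ((n : ℝ) + 1)⌋₊
    · left; exact min_eq_right h
    · right
      rw [min_eq_left (by omega), lt_kn_iff]
      push_cast
      exact Nat.lt_floor_add_one _

theorem idx_eq {n : ℕ} {x : ℝ} (j : Fin (n + 1)) (h1 : (j : ℕ) = 0 ∨ kn n j ≤ x)
    (h2 : (j : ℕ) = n ∨ x < kn n (j + 1)) : idx n x = j := by
  apply Fin.ext
  simp only [idx]
  have hj : (j : ℕ) ≤ ⌊x * ((n : ℝ) + 1)⌋₊ := by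
    rcases h1 with h1 | h1
    · omega
    · exact Nat.le_floor (kn_le_iff.mp h1)
  rcases h2 with h2 | h2
  · omega
  · rw [lt_kn_iff] at h2
    have : ⌊x * ((n : ℝ) + 1)⌋₊ < (j : ℕ) + 1 := by
      by_cases hx : 0 ≤ x * ((n : ℝ) + 1)
      · rw [Nat.floor_lt hx]; exact_mod_cast h2
      · rw [Nat.floor_of_nonpos (by linarith)]; omega
    omega

theorem mem_piece {n : ℕ} {j : ℕ} {x : ℝ} : x ∈ pieceSet (n + 1) j ↔
    (j = 0 ∨ kn n j ≤ x) ∧ (j = n ∨ x ≤ kn n (j + 1)) := by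
  have hle := (kn_lt n j).le
  have e1 : (1 : ℝ) / ((n : ℝ) + 1) = kn n 1 := by simp [kn]
  have e2 : (((n : ℝ) + 1) - 1) / ((n : ℝ) + 1) = kn n n := by simp [kn]
  have e3 : ((j : ℝ) + 1) / ((n : ℝ) + 1) = kn n (j + 1) := by simp [kn]
  have e4 : (j : ℝ) / ((n : ℝ) + 1) = kn n j := rfl
  simp only [pieceSet, Nat.add_sub_cancel, Nat.cast_add, Nat.cast_one, e1, e2, e3, e4]
  by_cases h0 : j = 0
  · subst h0
    by_cases hn : 0 = n
    · subst hn
      simp only [if_true, Set.mem_union, mem_Iic, mem_Ici, true_or, and_self, iff_true]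
      rcases le_total x (kn 0 1) with h | h
      · exact Or.inl h
      · exact Or.inr ((kn_lt 0 0).le.trans h)
    · simp [hn]
  · by_cases hn : j = n
    · subst hn
      simp only [h0, if_true, if_false, Set.mem_union, mem_Icc, mem_Ici, true_or, and_true, false_or]
      tauto
    · simp [h0, hn]

theorem mem_piece_idx (n : ℕ) (x : ℝ) : x ∈ pieceSet (n + 1) (idx n x) := by
  rw [mem_piece]
  have := idx_spec n x
  exact ⟨this.1, this.2.imp id le_of_lt⟩

/-- realization as a function -/
def TF {n : ℕ} (f : PP n) (x : ℝ) : ℝ := (f (idx n x)).eval x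

theorem TF_add {n : ℕ} (f g : PP n) (x : ℝ) : TF (f + g) x = TF f x + TF g x := by simp [TF]
theorem TF_sub {n : ℕ} (f g : PP n) (x : ℝ) : TF (f - g) x = TF f x - TF g x := by simp [TF]
theorem TF_smul {n : ℕ} (c : ℝ) (g : PP n) (x : ℝ) : TF (c • g) x = c * TF g x := by simp [TF]

theorem TF_piece {n : ℕ} {f : PP n} (hf : Cn f) (j : Fin (n + 1)) {x : ℝ} (hx : x ∈ pieceSet (n + 1) j) :
    TF f x = (f j).eval x := by
  rw [mem_piece] at hx
  by_cases h : (j : ℕ) = n ∨ x < kn n (j + 1)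
  · rw [TF, idx_eq j hx.1 h]
  · push Not at h
    have hxe : x = kn n (j + 1) := le_antisymm (hx.2.resolve_left h.1) h.2
    have hjn : (j : ℕ) < n := by omega
    have h2 : idx n x = (⟨j, hjn⟩ : Fin n).succ := by
      apply idx_eq
      · right; simp [hxe]
      · right; simp [hxe, kn_lt]
    have h3 := hf ⟨j, hjn⟩
    have h4 : (⟨j, hjn⟩ : Fin n).castSucc = j := by ext; simp
    rw [TF, h2, hxe, ← h3, h4]

theorem right_nhd (n : ℕ) (x : ℝ) : ∃ j : Fin (n + 1), x ∈ pieceSet (n + 1) j ∧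
    pieceSet (n + 1) j ∈ nhdsWithin x (Ici x) := by
  refine ⟨idx n x, mem_piece_idx n x, ?_⟩
  have h := idx_spec n x
  by_cases hn : (idx n x : ℕ) = n
  · filter_upwards [self_mem_nhdsWithin] with y hy
    rw [mem_piece]
    exact ⟨h.1.imp id (fun h => h.trans hy), Or.inl hn⟩
  · have hx := h.2.resolve_left hn
    filter_upwards [self_mem_nhdsWithin, mem_nhdsWithin_of_mem_nhds (Iio_mem_nhds hx)] with y hy hy2
    rw [mem_piece]
    exact ⟨h.1.imp id (fun h => h.trans hy), Or.inr (le_of_lt hy2)⟩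

theorem left_nhd (n : ℕ) (x : ℝ) : ∃ j : Fin (n + 1), x ∈ pieceSet (n + 1) j ∧
    pieceSet (n + 1) j ∈ nhdsWithin x (Iic x) := by
  have h := idx_spec n x
  by_cases h0 : (idx n x : ℕ) = 0 ∨ kn n (idx n x) < x
  · refine ⟨idx n x, mem_piece_idx n x, ?_⟩
    have hm := (mem_piece.mp (mem_piece_idx n x)).2
    rcases h0 with h0 | h0
    · filter_upwards [self_mem_nhdsWithin] with y hy
      rw [mem_piece]
      exact ⟨Or.inl h0, hm.imp id (fun h => le_trans hy h)⟩
    · filter_upwards [self_mem_nhdsWithin, mem_nhdsWithin_of_mem_nhds (Ioi_mem_nhds h0)] with y hy hy2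
      rw [mem_piece]
      exact ⟨Or.inr (le_of_lt hy2), hm.imp id (fun h => le_trans hy h)⟩
  · push Not at h0
    have hxe : x = kn n (idx n x) := le_antisymm h0.2 (h.1.resolve_left h0.1)
    obtain ⟨k, hk⟩ : ∃ k, (idx n x : ℕ) = k + 1 := ⟨(idx n x : ℕ) - 1, by omega⟩
    have hkn : k < n + 1 := by have := (idx n x).2; omega
    rw [hk] at hxe
    have hlt : kn n k < x := by rw [hxe]; exact kn_lt n k
    refine ⟨⟨k, hkn⟩, ?_, ?_⟩
    · rw [mem_piece]; exact ⟨Or.inr hlt.le, Or.inr hxe.le⟩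
    · filter_upwards [self_mem_nhdsWithin, mem_nhdsWithin_of_mem_nhds (Ioi_mem_nhds hlt)] with y hy hy2
      rw [mem_piece]
      exact ⟨Or.inr (le_of_lt hy2), Or.inr (le_trans hy hxe.le)⟩

theorem TF_cont {n : ℕ} {f : PP n} (hf : Cn f) : Continuous (TF f) := by
  rw [continuous_iff_continuousAt]
  intro x
  rw [continuousAt_iff_continuous_left_right]
  constructor
  · obtain ⟨j, h1, h2⟩ := left_nhd n x
    refine ((f j).continuous.continuousWithinAt (s := Iic x)).congr_of_eventuallyEq ?_ (TF_piece hf j h1)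
    filter_upwards [h2] with y hy using TF_piece hf j hy
  · obtain ⟨j, h1, h2⟩ := right_nhd n x
    refine ((f j).continuous.continuousWithinAt (s := Ici x)).congr_of_eventuallyEq ?_ (TF_piece hf j h1)
    filter_upwards [h2] with y hy using TF_piece hf j hy

theorem TF_hasDerivAt {n : ℕ} {f : PP n} (hf : Cn f) (hf' : Cn (dd n f)) (x : ℝ) :
    HasDerivAt (TF f) (TF (dd n f) x) x := by
  rw [← hasDerivWithinAt_univ, ← Iic_union_Ici (a := x)]
  apply HasDerivWithinAt.union
  · obtain ⟨j, h1, h2⟩ := left_nhd n x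
    rw [TF_piece hf' j h1]
    refine (((f j).hasDerivAt x).hasDerivWithinAt (s := Iic x)).congr_of_eventuallyEq ?_ (TF_piece hf j h1)
    filter_upwards [h2] with y hy using TF_piece hf j hy
  · obtain ⟨j, h1, h2⟩ := right_nhd n x
    rw [TF_piece hf' j h1]
    refine (((f j).hasDerivAt x).hasDerivWithinAt (s := Ici x)).congr_of_eventuallyEq ?_ (TF_piece hf j h1)
    filter_upwards [h2] with y hy using TF_piece hf j hy

theorem TF_contDiff {n : ℕ} (p : ℕ) : ∀ f : PP n, (∀ i ≤ p, Cn ((dd n ^ i) f)) →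
    ContDiff ℝ (p : ℕ) (TF f) := by
  induction p with
  | zero =>
    intro f hf
    have h0 : Cn f := by simpa using hf 0 le_rfl
    exact_mod_cast contDiff_zero.mpr (TF_cont h0)
  | succ p ih =>
    intro f hf
    have h0 : Cn f := by simpa using hf 0 (by omega)
    have h1 : Cn (dd n f) := by simpa using hf 1 (by omega)
    have hd := TF_hasDerivAt h0 h1
    have : deriv (TF f) = TF (dd n f) := funext fun x => (hd x).deriv
    push_cast
    rw [contDiff_succ_iff_deriv]
    refine ⟨fun x => (hd x).differentiableAt, by simp, ?_⟩
    rw [this]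
    exact ih _ fun i hi => by rw [← pow_succ_dd]; exact hf (i + 1) (by omega)

theorem TF_spline {n p : ℕ} (hp : 1 ≤ p) {f : PP n} (hf : f ∈ MM n p) : IsSpline (n + 1) p (TF f) := by
  refine ⟨(TF_contDiff (p - 1) f fun i hi => hf.2 i (by omega)).contDiffOn, fun j hj => ?_⟩
  exact ⟨f ⟨j, hj⟩, hf.1 _, fun x hx => TF_piece (MM_Cn hp hf) ⟨j, hj⟩ hx⟩

theorem poly_iteratedDeriv (q : Polynomial ℝ) (i : ℕ) :
    iteratedDeriv i (fun x => q.eval x) = fun x => (Polynomial.derivative^[i] q).eval x := by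
  induction i generalizing q with
  | zero => simp
  | succ i ih =>
    rw [iteratedDeriv_succ', Function.iterate_succ_apply, ← ih]
    congr 1
    funext x
    exact q.deriv

theorem dd_pow_apply {n : ℕ} (i : ℕ) (f : PP n) (j : Fin (n + 1)) :
    (dd n ^ i) f j = Polynomial.derivative^[i] (f j) := by
  induction i generalizing f with
  | zero => simp
  | succ i ih => rw [pow_succ_dd, ih, Function.iterate_succ_apply]; rfl

theorem poly_contDiff (q : Polynomial ℝ) (i : ℕ) : ContDiff ℝ (i : ℕ) (fun x => q.eval x) := by
  simpa [Polynomial.coe_aeval_eq_eval] using Polynomial.contDiff_aeval (R := ℝ) (𝕜 := ℝ) q (i : ℕ)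

theorem spline_TF {n p : ℕ} (hp : 1 ≤ p) {f : ℝ → ℝ} (hf : IsSpline (n + 1) p f) :
    ∃ q ∈ MM n p, f = TF q := by
  obtain ⟨hc, hq⟩ := hf
  choose q hqd hqe using fun j : Fin (n + 1) => hq j j.2
  refine ⟨q, ⟨hqd, fun i hi => ?_⟩, funext fun x => hqe _ x (mem_piece_idx n x)⟩
  intro j
  set k := kn n (j + 1) with hk
  have hk0 : 0 < k := by rw [hk, kn]; positivity
  have hk1 : k < 1 := by
    rw [hk, kn, div_lt_one (by positivity)]
    have := j.2
    exact_mod_cast Nat.succ_lt_succ this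
  have hca : ContDiffAt ℝ (i : ℕ) f k := (hc.contDiffAt (Ioo_mem_nhds hk0 hk1)).of_le
    (by exact_mod_cast (by omega : i ≤ p - 1))
  have key : ∀ (l : Fin (n + 1)) (s : Set ℝ), UniqueDiffOn ℝ s → k ∈ s → s ⊆ pieceSet (n + 1) l →
      iteratedDeriv i f k = (Polynomial.derivative^[i] (q l)).eval k := by
    intro l s hs hks hsub
    rw [← iteratedDerivWithin_eq_iteratedDeriv hs hca hks,
      iteratedDerivWithin_congr (g := fun x => (q l).eval x) (fun x hx => hqe l x (hsub hx)) hks,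
      iteratedDerivWithin_eq_iteratedDeriv hs (poly_contDiff (q l) i).contDiffAt hks, poly_iteratedDeriv]
  rw [dd_pow_apply, dd_pow_apply]
  rw [← key j.castSucc (Icc (kn n j) k) (uniqueDiffOn_Icc (kn_lt n j)) ⟨(kn_lt n j).le, le_rfl⟩ ?_,
    ← key j.succ (Icc k (kn n (j + 1 + 1))) (uniqueDiffOn_Icc (kn_lt n (j + 1))) ⟨le_rfl, (kn_lt n (j + 1)).le⟩ ?_]
  · intro x hx
    rw [mem_piece]
    exact ⟨Or.inr (by simpa using hx.1), Or.inr (by simpa using hx.2)⟩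
  · intro x hx
    rw [mem_piece]
    exact ⟨Or.inr (by simpa using hx.1), Or.inr (by simpa using hx.2)⟩

theorem TF_iter0 {n : ℕ} (f : PP n) (i : ℕ) : iteratedDeriv i (TF f) 0 = b0 ((dd n ^ i) f) := by
  have h : TF f =ᶠ[nhds 0] fun x => (f 0).eval x := by
    have : (0 : ℝ) < kn n 1 := by rw [kn]; positivity
    filter_upwards [Iio_mem_nhds this] with y hy
    rw [TF, idx_eq 0 (Or.inl rfl) (Or.inr (by simpa using hy))]
  rw [h.iteratedDeriv_eq, poly_iteratedDeriv, b0, dd_pow_apply]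

theorem TF_iter1 {n : ℕ} (f : PP n) (i : ℕ) : iteratedDeriv i (TF f) 1 = b1 ((dd n ^ i) f) := by
  have h : TF f =ᶠ[nhds 1] fun x => (f (Fin.last n)).eval x := by
    have : kn n n < 1 := by rw [← kn_last n]; exact kn_lt n n
    filter_upwards [Ioi_mem_nhds this] with y hy
    rw [TF, idx_eq (Fin.last n) (Or.inr (le_of_lt (by simpa using hy))) (Or.inl (by simp))]
  rw [h.iteratedDeriv_eq, poly_iteratedDeriv, b1, dd_pow_apply]

theorem BB_iff {n p : ℕ} (f : PP n) : f ∈ BB n 0 p ↔ ∀ l : ℕ, 2 * l + 1 < p →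
    iteratedDeriv (2 * l + 1) (TF f) 0 = 0 ∧ iteratedDeriv (2 * l + 1) (TF f) 1 = 0 := by
  simp_rw [TF_iter0, TF_iter1]
  constructor
  · intro h l hl
    exact h (2 * l + 1) hl ⟨l, by ring⟩
  · rintro h i hi ⟨l, hl⟩
    have : i = 2 * l + 1 := by omega
    subst this
    exact h l hi

theorem TF_spline0 {n p : ℕ} (hp : 1 ≤ p) {f : PP n} (hf : f ∈ sp n 0 p) : IsSpline0 (n + 1) p (TF f) :=
  ⟨TF_spline hp hf.1, (BB_iff f).mp hf.2⟩

theorem spline0_TF {n p : ℕ} (hp : 1 ≤ p) {f : ℝ → ℝ} (hf : IsSpline0 (n + 1) p f) :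
    ∃ q ∈ sp n 0 p, f = TF q := by
  obtain ⟨q, hq, rfl⟩ := spline_TF hp hf.1
  exact ⟨q, ⟨hq, (BB_iff q).mpr hf.2⟩, rfl⟩

theorem TF_eq_Ioo {n : ℕ} (f : PP n) (j : Fin (n + 1)) {x : ℝ} (hx : x ∈ Ioo (kn n j) (kn n (j + 1))) :
    TF f x = (f j).eval x := by
  rw [TF, idx_eq j (Or.inr hx.1.le) (Or.inr hx.2)]

theorem TF2_piece_int {n : ℕ} (f g : PP n) (j : Fin (n + 1)) :
    IntervalIntegrable (fun x => TF f x * TF g x) volume (kn n j) (kn n (j + 1)) ∧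
    ∫ x in (kn n j)..(kn n (j + 1)), TF f x * TF g x =
      ∫ x in (kn n j)..(kn n (j + 1)), (f j).eval x * (g j).eval x := by
  have hle := (kn_lt n j).le
  have he : EqOn (fun x => (f j).eval x * (g j).eval x) (fun x => TF f x * TF g x)
      (Ioo (kn n j) (kn n (j + 1))) := fun x hx => by
    simp only [TF_eq_Ioo f j hx, TF_eq_Ioo g j hx]
  constructor
  · rw [intervalIntegrable_iff_integrableOn_Ioo_of_le hle]
    refine IntegrableOn.congr_fun ?_ he measurableSet_Ioo
    rw [← intervalIntegrable_iff_integrableOn_Ioo_of_le hle]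
    exact pint2 _ _ _ _
  · rw [intervalIntegral.integral_of_le hle, intervalIntegral.integral_of_le hle,
      integral_Ioc_eq_integral_Ioo, integral_Ioc_eq_integral_Ioo]
    exact (setIntegral_congr_fun measurableSet_Ioo he).symm

theorem TF2_int {n : ℕ} (f g : PP n) :
    Integrable (fun x => TF f x * TF g x) (volume.restrict (Ioo (0 : ℝ) 1)) := by
  have h := IntervalIntegrable.trans_iterate (a := kn n) (n := n + 1) (μ := volume)
    (f := fun x => TF f x * TF g x)
    (fun k hk => (TF2_piece_int f g ⟨k, hk⟩).1)
  rw [kn_zero, kn_last, intervalIntegrable_iff_integrableOn_Ioo_of_le zero_le_one] at h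
  exact h

theorem TF_ip {n : ℕ} (f g : PP n) : ip0 (TF f) (TF g) = inner ℝ f g := by
  have h := intervalIntegral.sum_integral_adjacent_intervals (a := kn n) (n := n + 1) (μ := volume)
    (f := fun x => TF f x * TF g x)
    (fun k hk => (TF2_piece_int f g ⟨k, hk⟩).1)
  rw [kn_zero, kn_last] at h
  rw [ip0, ← integral_Ioc_eq_integral_Ioo, ← intervalIntegral.integral_of_le zero_le_one, ← h,
    inner_def, ipp, Finset.sum_range]
  exact Finset.sum_congr rfl fun j _ => (TF2_piece_int f g j).2

/-- interior (non-knot) points -/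
def Good (n : ℕ) (x : ℝ) : Prop := ∃ j : Fin (n + 1), x ∈ Ioo (kn n j) (kn n (j + 1))

theorem Good_deriv {n : ℕ} (f : PP n) {x : ℝ} (hx : Good n x) : HasDerivAt (TF f) (TF (dd n f) x) x := by
  obtain ⟨j, hj⟩ := hx
  rw [TF_eq_Ioo _ j hj]
  refine ((f j).hasDerivAt x).congr_of_eventuallyEq ?_
  filter_upwards [Ioo_mem_nhds hj.1 hj.2] with y hy using TF_eq_Ioo f j hy

theorem Good_ae (n : ℕ) : ∀ᵐ x ∂(volume.restrict (Ioo (0 : ℝ) 1)), Good n x := by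
  rw [ae_restrict_iff' measurableSet_Ioo]
  have hc : (Set.range (kn n)).Countable := Set.countable_range _
  filter_upwards [hc.ae_notMem volume] with x hx hx01
  refine ⟨idx n x, ?_, ?_⟩
  · have h := (idx_spec n x).1
    rcases h with h | h
    · rw [h, kn_zero]; exact hx01.1
    · exact lt_of_le_of_ne h (fun e => hx ⟨_, e⟩)
  · have h := (idx_spec n x).2
    rcases h with h | h
    · rw [h, kn_last]; exact hx01.2
    · exact h
def TT {n : ℕ} {ι : Type} [Fintype ι] (F G : ι → PP n) (x : Fin 2 → ℝ) : ℝ :=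
  ∑ k, TF (F k) (x 0) * TF (G k) (x 1)

def gram {n : ℕ} {ι κ : Type} [Fintype ι] [Fintype κ] (F G : ι → PP n) (F' G' : κ → PP n) : ℝ :=
  ∑ k, ∑ l, inner ℝ (F k) (F' l) * inner ℝ (G k) (G' l)

theorem cube_restrict : (volume : Measure (Fin 2 → ℝ)).restrict (cube 2) =
    Measure.pi (fun _ : Fin 2 => volume.restrict (Ioo (0 : ℝ) 1)) := by
  rw [volume_pi, cube, Measure.restrict_pi_pi]

theorem prod_int {a b : ℝ → ℝ} (ha : Integrable a (volume.restrict (Ioo (0 : ℝ) 1)))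
    (hb : Integrable b (volume.restrict (Ioo (0 : ℝ) 1))) :
    Integrable (fun x : Fin 2 → ℝ => a (x 0) * b (x 1)) (volume.restrict (cube 2)) := by
  rw [cube_restrict]
  have := Integrable.fintype_prod (ι := Fin 2) (f := ![a, b])
    (μ := fun _ => volume.restrict (Ioo (0 : ℝ) 1)) (by
      intro i; fin_cases i
      · exact ha
      · exact hb)
  simpa [Fin.prod_univ_two] using this

theorem prod_int_eq (a b : ℝ → ℝ) :
    ∫ x in cube 2, a (x 0) * b (x 1) = (∫ x in Ioo (0 : ℝ) 1, a x) * ∫ x in Ioo (0 : ℝ) 1, b x := by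
  rw [cube_restrict]
  have := integral_fintype_prod_eq_prod (ι := Fin 2) (𝕜 := ℝ) (E := fun _ => ℝ) (![a, b])
    (μ := fun _ => volume.restrict (Ioo (0 : ℝ) 1))
  simpa [Fin.prod_univ_two] using this

theorem TT_mul {n : ℕ} {ι κ : Type} [Fintype ι] [Fintype κ] (F G : ι → PP n) (F' G' : κ → PP n)
    (x : Fin 2 → ℝ) : TT F G x * TT F' G' x =
    ∑ k, ∑ l, (TF (F k) (x 0) * TF (F' l) (x 0)) * (TF (G k) (x 1) * TF (G' l) (x 1)) := by
  rw [TT, TT, Finset.sum_mul_sum]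
  refine Finset.sum_congr rfl fun k _ => Finset.sum_congr rfl fun l _ => by ring

theorem TT_mul_int {n : ℕ} {ι κ : Type} [Fintype ι] [Fintype κ] (F G : ι → PP n) (F' G' : κ → PP n) :
    Integrable (fun x => TT F G x * TT F' G' x) (volume.restrict (cube 2)) := by
  simp_rw [TT_mul]
  refine integrable_finsetSum _ fun k _ => integrable_finsetSum _ fun l _ => ?_
  exact prod_int (TF2_int _ _) (TF2_int _ _)

theorem TT_ipd {n : ℕ} {ι κ : Type} [Fintype ι] [Fintype κ] (F G : ι → PP n) (F' G' : κ → PP n) :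
    ipd 2 (TT F G) (TT F' G') = gram F G F' G' := by
  rw [ipd, gram]
  simp_rw [TT_mul]
  rw [integral_finsetSum _ fun k _ => integrable_finsetSum _ fun l _ =>
    prod_int (TF2_int _ _) (TF2_int _ _)]
  refine Finset.sum_congr rfl fun k _ => ?_
  rw [integral_finsetSum _ fun l _ => prod_int (TF2_int _ _) (TF2_int _ _)]
  refine Finset.sum_congr rfl fun l _ => ?_
  rw [prod_int_eq (fun y => TF (F k) y * TF (F' l) y) (fun y => TF (G k) y * TF (G' l) y),
    ← TF_ip, ← TF_ip]
  rfl

def gg {n : ℕ} {ι : Type} [Fintype ι] (F G : ι → PP n) : ℝ := gram F G F G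

theorem gg_comm {n : ℕ} {ι : Type} [Fintype ι] (F G : ι → PP n) : gg F G = gg G F := by
  simp only [gg, gram]
  refine Finset.sum_congr rfl fun k _ => Finset.sum_congr rfl fun l _ => mul_comm _ _

theorem TT_l2 {n : ℕ} {ι : Type} [Fintype ι] (F G : ι → PP n) : l2normSqD 2 (TT F G) = gg F G := by
  rw [gg, ← TT_ipd, ipd, l2normSqD]
  simp_rw [sq]

theorem TT_pd0 {n : ℕ} {ι : Type} [Fintype ι] (F G : ι → PP n) {x : Fin 2 → ℝ} (hx : Good n (x 0)) :
    pd 2 0 (TT F G) x = TT (fun k => dd n (F k)) G x := by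
  have h : HasDerivAt (fun t => TT F G (Function.update x 0 t)) (TT (fun k => dd n (F k)) G x) (x 0) := by
    simp only [TT]
    refine HasDerivAt.fun_sum fun k _ => ?_
    simpa using (Good_deriv (F k) hx).mul_const (TF (G k) (x 1))
  exact h.deriv

theorem TT_pd1 {n : ℕ} {ι : Type} [Fintype ι] (F G : ι → PP n) {x : Fin 2 → ℝ} (hx : Good n (x 1)) :
    pd 2 1 (TT F G) x = TT F (fun k => dd n (G k)) x := by
  have h : HasDerivAt (fun t => TT F G (Function.update x 1 t)) (TT F (fun k => dd n (G k)) x) (x 1) := by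
    simp only [TT]
    refine HasDerivAt.fun_sum fun k _ => ?_
    simpa using (Good_deriv (G k) hx).const_mul (TF (F k) (x 0))
  exact h.deriv

theorem TT_h1 {n : ℕ} {ι : Type} [Fintype ι] (F G : ι → PP n) :
    h1semiSqD 2 (TT F G) = gg (fun k => dd n (F k)) G + gg F (fun k => dd n (G k)) := by
  rw [gg, gg, ← TT_ipd, ← TT_ipd, ipd, ipd, ← integral_add (TT_mul_int _ _ _ _) (TT_mul_int _ _ _ _),
    h1semiSqD]
  apply integral_congr_ae
  rw [cube_restrict]
  have h0 := (Measure.tendsto_eval_ae_ae (μ := fun _ : Fin 2 => volume.restrict (Ioo (0 : ℝ) 1)) (i := 0)).eventually (Good_ae n)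
  have h1 := (Measure.tendsto_eval_ae_ae (μ := fun _ : Fin 2 => volume.restrict (Ioo (0 : ℝ) 1)) (i := 1)).eventually (Good_ae n)
  filter_upwards [h0, h1] with x hx0 hx1
  rw [Fin.sum_univ_two, TT_pd0 F G hx0, TT_pd1 F G hx1, sq, sq]

/-! Schur product argument -/

theorem schur {n : ℕ} {ι : Type} [Fintype ι] (V : Submodule ℝ (PP n))
    (A : PP n →ₗ[ℝ] PP n →ₗ[ℝ] ℝ) (hA : ∀ f ∈ V, 0 ≤ A f f) (F G : ι → PP n) (hF : ∀ k, F k ∈ V) :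
    0 ≤ ∑ k, ∑ l, A (F k) (F l) * inner ℝ (G k) (G l) := by
  let W := Submodule.span ℝ (Set.range G)
  have : FiniteDimensional ℝ W := FiniteDimensional.span_of_finite ℝ (Set.finite_range G)
  let g : ι → W := fun k => ⟨G k, Submodule.subset_span ⟨k, rfl⟩⟩
  let b := stdOrthonormalBasis ℝ W
  have h1 : ∀ k l, inner ℝ (G k) (G l) = ∑ i, inner ℝ (g k) (b i) * inner ℝ (b i) (g l) := by
    intro k l
    rw [b.sum_inner_mul_inner]; rfl
  have h2 : ∑ k, ∑ l, A (F k) (F l) * inner ℝ (G k) (G l) =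
      ∑ i, A (∑ k, inner ℝ (g k) (b i) • F k) (∑ k, inner ℝ (g k) (b i) • F k) := by
    simp only [h1, map_sum, LinearMap.sum_apply, map_smul, LinearMap.smul_apply, smul_eq_mul,
      Finset.mul_sum]
    rw [Finset.sum_comm' (t' := Finset.univ) (s' := fun _ => Finset.univ) (by simp)]
    rw [Finset.sum_comm]
    rw [Finset.sum_comm]
    simp_rw [Finset.sum_comm (s := (Finset.univ : Finset ι)) (t := (Finset.univ : Finset (Fin (Module.finrank ℝ W))))]
    refine Finset.sum_congr rfl fun i _ => ?_
    refine Finset.sum_congr rfl fun k _ => ?_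
    refine Finset.sum_congr rfl fun l _ => ?_
    rw [real_inner_comm (b i) (g k), real_inner_comm (b i) (g l)]
    ring
  rw [h2]
  exact Finset.sum_nonneg fun i _ => hA _ (V.sum_mem fun k _ => V.smul_mem _ (hF k))

theorem gg_mono {n : ℕ} {ι σ : Type} [Fintype ι] [Fintype σ] (V : Submodule ℝ (PP n))
    (L : PP n →ₗ[ℝ] PP n) (Ls : σ → PP n →ₗ[ℝ] PP n) (c : ℝ)
    (h : ∀ f ∈ V, ‖L f‖ ^ 2 ≤ c * ∑ s, ‖Ls s f‖ ^ 2) (F G : ι → PP n) (hF : ∀ k, F k ∈ V) :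
    gg (fun k => L (F k)) G ≤ c * ∑ s, gg (fun k => Ls s (F k)) G := by
  let B : (PP n →ₗ[ℝ] PP n) → PP n →ₗ[ℝ] PP n →ₗ[ℝ] ℝ := fun L => (innerₗ (PP n)).compl₁₂ L L
  have hB : ∀ L f g, B L f g = inner ℝ (L f) (L g) := fun L f g => rfl
  have := schur V (c • ∑ s, B (Ls s) - B L) (by
    intro f hf
    simp only [LinearMap.sub_apply, LinearMap.smul_apply, LinearMap.sum_apply, hB,
      real_inner_self_eq_norm_sq, smul_eq_mul]
    linarith [h f hf]) F G hF
  simp only [LinearMap.sub_apply, LinearMap.smul_apply, LinearMap.sum_apply, hB, smul_eq_mul, sub_mul,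
    Finset.sum_sub_distrib] at this
  have e : ∑ k, ∑ l, c * (∑ s, inner ℝ (Ls s (F k)) (Ls s (F l))) * inner ℝ (G k) (G l) =
      c * ∑ s, gg (fun k => Ls s (F k)) G := by
    simp only [gg, gram]
    rw [Finset.sum_comm (γ := σ)]
    simp_rw [Finset.sum_comm (s := (Finset.univ : Finset σ))]
    simp only [Finset.mul_sum, Finset.sum_mul, mul_assoc]
  rw [e] at this
  simp only [gg, gram] at this ⊢
  linarith

theorem gg_mono1 {n : ℕ} {ι : Type} [Fintype ι] (V : Submodule ℝ (PP n))
    (L L' : PP n →ₗ[ℝ] PP n) (c : ℝ)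
    (h : ∀ f ∈ V, ‖L f‖ ^ 2 ≤ c * ‖L' f‖ ^ 2) (F G : ι → PP n) (hF : ∀ k, F k ∈ V) :
    gg (fun k => L (F k)) G ≤ c * gg (fun k => L' (F k)) G := by
  have := gg_mono (σ := Unit) V L (fun _ => L') c (by simpa using h) F G hF
  simpa using this

theorem gg_nonneg {n : ℕ} {ι : Type} [Fintype ι] (F G : ι → PP n) : 0 ≤ gg F G := by
  have := gg_mono1 ⊤ 0 LinearMap.id 1 (by intro f _; simp) F G (fun _ => trivial)
  simpa [gg, gram] using this

/-- Q_a -/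
def QQ (n p : ℕ) : Bool → PP n →ₗ[ℝ] PP n
  | false => Q0 n p
  | true => LinearMap.id - Q0 n p

def US (n p : ℕ) : Bool → Submodule ℝ (PP n)
  | false => sp n 0 p
  | true => MM n p ⊓ (sp n 0 p)ᗮ

theorem US_le (n p : ℕ) (a : Bool) : US n p a ≤ MM n p := by
  cases a
  · exact inf_le_left
  · exact inf_le_left

theorem QQ_mem {n p : ℕ} (a : Bool) {f : PP n} (hf : f ∈ MM n p) : QQ n p a f ∈ US n p a := by
  cases a
  · exact Q0_mem n p f
  · exact ⟨(MM n p).sub_mem hf (Q0_mem n p f).1, Submodule.sub_starProjection_mem_orthogonal _⟩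

theorem QQ_orth {n p : ℕ} (a : Bool) (f : PP n) {g : PP n} (hg : g ∈ US n p a) :
    inner ℝ (QQ n p a f) g = inner ℝ f g := by
  cases a
  · have := Q0_orth n p f g hg
    rw [inner_sub_left] at this
    simp only [QQ]; linarith
  · have := hg.2 _ (Q0_mem n p f)
    simp only [QQ, LinearMap.sub_apply, LinearMap.id_apply, inner_sub_left, this, sub_zero]

theorem QQ_norm (n p : ℕ) (a : Bool) (f : PP n) : ‖QQ n p a f‖ ≤ ‖f‖ := by
  cases a
  · exact Q0_norm n p f
  · exact Q1_norm n p f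

theorem QQ_stable {n p : ℕ} (hp : 1 ≤ p) (a : Bool) {f : PP n} (hf : f ∈ MM n p) :
    ‖dd n (QQ n p a f)‖ ≤ 6 * ‖dd n f‖ := by
  have h := Q0_stable hp hf
  cases a
  · have := norm_nonneg (dd n f)
    simp only [QQ]; linarith
  · simp only [QQ, LinearMap.sub_apply, LinearMap.id_apply, map_sub]
    refine (norm_sub_le _ _).trans ?_
    linarith

theorem QQ_split {n : ℕ} (p : ℕ) (L : PP n →ₗ[ℝ] PP n) (f : PP n) :
    ‖L f‖ ^ 2 ≤ 2 * ∑ a, ‖L (QQ n p a f)‖ ^ 2 := by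
  have e : L f = L (QQ n p true f) + L (QQ n p false f) := by
    rw [← map_add]; simp [QQ]
  rw [Fintype.sum_bool, e]
  have h := norm_add_le (L (QQ n p true f)) (L (QQ n p false f))
  have h0 := norm_nonneg (L (QQ n p true f) + L (QQ n p false f))
  nlinarith [sq_nonneg (‖L (QQ n p true f)‖ - ‖L (QQ n p false f)‖)]

theorem C_TF {n p : ℕ} (hp : 1 ≤ p) (a : Bool) {f : ℝ → ℝ} (hf : IsSplineC (n + 1) p a f) :
    ∃ q ∈ US n p a, f = TF q := by
  cases a
  · exact spline0_TF hp hf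
  · obtain ⟨q, hq, rfl⟩ := spline_TF hp hf.1
    refine ⟨q, ⟨hq, ?_⟩, rfl⟩
    intro w hw
    have := hf.2 _ (TF_spline0 hp hw)
    rw [TF_ip] at this
    rw [real_inner_comm]; exact this

theorem TF_C {n p : ℕ} (hp : 1 ≤ p) (a : Bool) {q : PP n} (hq : q ∈ US n p a) :
    IsSplineC (n + 1) p a (TF q) := by
  cases a
  · exact TF_spline0 hp hq
  · refine ⟨TF_spline hp hq.1, ?_⟩
    intro v hv
    obtain ⟨w, hw, rfl⟩ := spline0_TF hp hv
    rw [TF_ip, real_inner_comm]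
    exact hq.2 w hw

theorem span_rep {n : ℕ} (P : Fin 2 → (ℝ → ℝ) → Prop) (U : Fin 2 → Submodule ℝ (PP n))
    (hP : ∀ i f, P i f → ∃ q ∈ U i, f = TF q) {u : (Fin 2 → ℝ) → ℝ}
    (hu : u ∈ Submodule.span ℝ {u | ∃ f : Fin 2 → ℝ → ℝ, (∀ i, P i (f i)) ∧
      u = fun x => ∏ i, f i (x i)}) :
    ∃ (ι : Type) (_ : Fintype ι) (F G : ι → PP n), (∀ k, F k ∈ U 0) ∧ (∀ k, G k ∈ U 1) ∧ u = TT F G := by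
  induction hu using Submodule.span_induction with
  | mem x hx =>
    obtain ⟨f, hf, rfl⟩ := hx
    obtain ⟨q, hq, e⟩ := hP 0 _ (hf 0)
    obtain ⟨r, hr, e'⟩ := hP 1 _ (hf 1)
    refine ⟨Unit, inferInstance, fun _ => q, fun _ => r, fun _ => hq, fun _ => hr, ?_⟩
    funext x
    simp [TT, Fin.prod_univ_two, e, e']
  | zero =>
    refine ⟨Empty, inferInstance, fun _ => 0, fun _ => 0, fun k => k.elim, fun k => k.elim, ?_⟩
    funext x
    simp [TT]
  | add x y _ _ hx hy =>
    obtain ⟨ι, i1, F, G, hF, hG, rfl⟩ := hx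
    obtain ⟨κ, i2, F', G', hF', hG', rfl⟩ := hy
    refine ⟨ι ⊕ κ, inferInstance, Sum.elim F F', Sum.elim G G', ?_, ?_, ?_⟩
    · rintro (k | k)
      · exact hF k
      · exact hF' k
    · rintro (k | k)
      · exact hG k
      · exact hG' k
    · funext x
      simp [TT, Fintype.sum_sum_type]
  | smul c x _ hx =>
    obtain ⟨ι, i1, F, G, hF, hG, rfl⟩ := hx
    refine ⟨ι, i1, fun k => c • F k, G, fun k => (U 0).smul_mem _ (hF k), hG, ?_⟩
    funext x
    simp [TT, TF_smul, Finset.mul_sum, mul_assoc]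

theorem sub_rep {n p : ℕ} (hp : 1 ≤ p) (α : Fin 2 → Bool) {u : (Fin 2 → ℝ) → ℝ}
    (hu : u ∈ TensorSplineSub 2 (n + 1) p α) :
    ∃ (ι : Type) (_ : Fintype ι) (F G : ι → PP n), (∀ k, F k ∈ US n p (α 0)) ∧
      (∀ k, G k ∈ US n p (α 1)) ∧ u = TT F G :=
  span_rep (fun i => IsSplineC (n + 1) p (α i)) (fun i => US n p (α i)) (fun i _ h => C_TF hp (α i) h) hu

theorem TT_mem_sub {n p : ℕ} (hp : 1 ≤ p) (α : Fin 2 → Bool) {ι : Type} [Fintype ι] (F G : ι → PP n)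
    (hF : ∀ k, F k ∈ US n p (α 0)) (hG : ∀ k, G k ∈ US n p (α 1)) :
    TT F G ∈ TensorSplineSub 2 (n + 1) p α := by
  have : TT F G = ∑ k, fun x : Fin 2 → ℝ => TF (F k) (x 0) * TF (G k) (x 1) := by
    funext x; simp [TT]
  rw [this]
  refine Submodule.sum_mem _ fun k _ => Submodule.subset_span ?_
  refine ⟨![TF (F k), TF (G k)], ?_, ?_⟩
  · intro i
    fin_cases i
    · exact TF_C hp _ (hF k)
    · exact TF_C hp _ (hG k)
  · funext x
    simp [Fin.prod_univ_two]

theorem TT_cont {n : ℕ} {ι : Type} [Fintype ι] {F G : ι → PP n} (hF : ∀ k, Cn (F k)) (hG : ∀ k, Cn (G k)) :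
    Continuous (TT F G) := by
  unfold TT
  refine continuous_finsetSum _ fun k _ => ?_
  exact ((TF_cont (hF k)).comp (continuous_apply 0)).mul ((TF_cont (hG k)).comp (continuous_apply 1))

theorem cube_open : IsOpen (cube 2) := isOpen_set_pi Set.finite_univ fun _ _ => isOpen_Ioo

theorem TT_sub {n : ℕ} {ι κ : Type} [Fintype ι] [Fintype κ] (F G : ι → PP n) (F' G' : κ → PP n) :
    TT F G - TT F' G' = TT (Sum.elim F (fun k => (-1 : ℝ) • F' k)) (Sum.elim G G') := by
  funext x
  simp only [Pi.sub_apply, TT, Fintype.sum_sum_type, Sum.elim_inl, Sum.elim_inr, TF_smul]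
  simp [Finset.sum_neg_distrib, sub_eq_add_neg]

/-- the given projection coincides with the tensor product one on the cube -/
theorem proj_eq {n p : ℕ} (hp : 1 ≤ p) (α : Fin 2 → Bool) {ι : Type} [Fintype ι] (F G : ι → PP n)
    (hF : ∀ k, F k ∈ MM n p) (hG : ∀ k, G k ∈ MM n p) {v : (Fin 2 → ℝ) → ℝ}
    (hv : IsL2ProjSub 2 (n + 1) p α (TT F G) v) :
    EqOn v (TT (fun k => QQ n p (α 0) (F k)) (fun k => QQ n p (α 1) (G k))) (cube 2) := by
  obtain ⟨hv1, hv2⟩ := hv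
  set v' := TT (fun k => QQ n p (α 0) (F k)) (fun k => QQ n p (α 1) (G k)) with hv'
  have hv'm : v' ∈ TensorSplineSub 2 (n + 1) p α :=
    TT_mem_sub hp α _ _ (fun k => QQ_mem _ (hF k)) (fun k => QQ_mem _ (hG k))
  have hz := hv2 _ (Submodule.sub_mem _ hv1 hv'm)
  obtain ⟨κ, i2, A, B, hA, hB, e⟩ := sub_rep hp α (Submodule.sub_mem _ hv1 hv'm)
  have e2 : v = v' + TT A B := by rw [← e]; abel
  have e3 : ipd 2 (TT F G - v) (v - v') = gram F G A B
      - gram (fun k => QQ n p (α 0) (F k)) (fun k => QQ n p (α 1) (G k)) A B - gram A B A B := by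
    rw [e, e2, ← sub_sub, hv', TT_sub, TT_sub, TT_ipd]
    simp [gram, Fintype.sum_sum_type]
    ring
  have e4 : gram (fun k => QQ n p (α 0) (F k)) (fun k => QQ n p (α 1) (G k)) A B = gram F G A B := by
    simp only [gram]
    refine Finset.sum_congr rfl fun k _ => Finset.sum_congr rfl fun l _ => ?_
    rw [QQ_orth _ _ (hA l), QQ_orth _ _ (hB l)]
  rw [e3, e4, sub_self, zero_sub, neg_eq_zero, ← TT_ipd, ipd] at hz
  have hc : Continuous (TT A B) := TT_cont (fun k => MM_Cn hp (US_le _ _ _ (hA k)))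
    (fun k => MM_Cn hp (US_le _ _ _ (hB k)))
  rw [integral_eq_zero_iff_of_nonneg (fun x => mul_self_nonneg _) (TT_mul_int _ _ _ _)] at hz
  have h0 : TT A B =ᵐ[volume.restrict (cube 2)] fun _ => 0 := by
    filter_upwards [hz] with x hx
    simpa using hx
  have h1 := Measure.eqOn_open_of_ae_eq h0 cube_open hc.continuousOn continuousOn_const
  intro x hx
  rw [e2]
  simp [h1 hx]

theorem cube_meas : MeasurableSet (cube 2) := cube_open.measurableSet

theorem l2_congr {u v : (Fin 2 → ℝ) → ℝ} (h : EqOn u v (cube 2)) : l2normSqD 2 u = l2normSqD 2 v :=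
  setIntegral_congr_fun cube_meas fun x hx => by simp only [h hx]

theorem h1_congr {u v : (Fin 2 → ℝ) → ℝ} (h : EqOn u v (cube 2)) : h1semiSqD 2 u = h1semiSqD 2 v := by
  refine setIntegral_congr_fun cube_meas fun x hx => ?_
  refine Finset.sum_congr rfl fun i _ => ?_
  congr 1
  refine Filter.EventuallyEq.deriv_eq ?_
  have hc : ContinuousAt (fun t => Function.update x i t) (x i) := by fun_prop
  have hm : cube 2 ∈ nhds (Function.update x i (x i)) := by
    rw [Function.update_eq_self]; exact cube_open.mem_nhds hx
  filter_upwards [hc.preimage_mem_nhds hm] with t ht using h ht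

theorem sum_alpha (X : Bool → Bool → ℝ) : ∑ α : Fin 2 → Bool, X (α 0) (α 1) = ∑ a, ∑ b, X a b := by
  rw [← Fintype.sum_prod_type (fun q : Bool × Bool => X q.1 q.2), ← (finTwoArrowEquiv Bool).sum_comp]
  rfl

/-- upper bounds -/
theorem upper_aux {n p : ℕ} {ι : Type} [Fintype ι] (F G : ι → PP n) (L : PP n →ₗ[ℝ] PP n) (c : ℝ) (hc : 0 ≤ c)
    (a b : Bool) (hF : ∀ k, F k ∈ MM n p)
    (h : ∀ f ∈ MM n p, ‖L (QQ n p a f)‖ ≤ c * ‖L f‖) :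
    gg (fun k => L (QQ n p a (F k))) (fun k => QQ n p b (G k)) ≤ c ^ 2 * gg (fun k => L (F k)) G := by
  have h1 := gg_mono1 (MM n p) (L ∘ₗ QQ n p a) L (c ^ 2) (fun f hf => by
    rw [← mul_pow]
    exact pow_le_pow_left₀ (norm_nonneg _) (h f hf) 2) F (fun k => QQ n p b (G k)) hF
  have h2 := gg_mono1 ⊤ (QQ n p b) LinearMap.id 1 (fun f _ => by
    rw [one_mul]
    exact pow_le_pow_left₀ (norm_nonneg _) (QQ_norm n p b f) 2) G (fun k => L (F k)) (fun _ => trivial)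
  rw [gg_comm _ (fun k => L (F k)), gg_comm _ (fun k => L (F k)), one_mul] at h2
  refine h1.trans (mul_le_mul_of_nonneg_left h2 (by positivity))

theorem lower_aux {n p : ℕ} {ι : Type} [Fintype ι] (F G : ι → PP n) (L : PP n →ₗ[ℝ] PP n) :
    gg (fun k => L (F k)) G ≤
      4 * ∑ a, ∑ b, gg (fun k => L (QQ n p a (F k))) (fun k => QQ n p b (G k)) := by
  have h1 := gg_mono ⊤ L (fun a => L ∘ₗ QQ n p a) 2 (fun f _ => QQ_split p L f) F G (fun _ => trivial)
  have h2 : ∀ a, gg (fun k => L (QQ n p a (F k))) G ≤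
      2 * ∑ b, gg (fun k => L (QQ n p a (F k))) (fun k => QQ n p b (G k)) := by
    intro a
    have := gg_mono ⊤ LinearMap.id (fun b => QQ n p b) 2 (fun f _ => QQ_split p LinearMap.id f) G
      (fun k => L (QQ n p a (F k))) (fun _ => trivial)
    rw [gg_comm]
    refine this.trans (le_of_eq ?_)
    congr 1
    exact Finset.sum_congr rfl fun b _ => gg_comm _ _
  have h3 := Finset.sum_le_sum (s := Finset.univ) fun a _ => h2 a
  rw [← Finset.mul_sum] at h3
  have h1' : gg (fun k => L (F k)) G ≤ 2 * ∑ a, gg (fun k => L (QQ n p a (F k))) G := h1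
  linarith

theorem main_aux {n p : ℕ} (hp : 1 ≤ p) {ι : Type} [Fintype ι] (F G : ι → PP n)
    (hF : ∀ k, F k ∈ MM n p) (hG : ∀ k, G k ∈ MM n p) :
    let V := fun a b => TT (fun k => QQ n p a (F k)) (fun k => QQ n p b (G k))
    (h1semiSqD 2 (TT F G) ≤ 4 * ∑ a, ∑ b, h1semiSqD 2 (V a b)) ∧
    (∀ a b, h1semiSqD 2 (V a b) ≤ 36 * h1semiSqD 2 (TT F G)) ∧
    (l2normSqD 2 (TT F G) ≤ 4 * ∑ a, ∑ b, l2normSqD 2 (V a b)) ∧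
    (∀ a b, l2normSqD 2 (V a b) ≤ 36 * l2normSqD 2 (TT F G)) := by
  intro V
  simp only [V, TT_h1, TT_l2]
  refine ⟨?_, fun a b => ?_, ?_, fun a b => ?_⟩
  · have h1 := lower_aux (p := p) F G (dd n)
    have h2 := lower_aux (p := p) G F (dd n)
    rw [gg_comm _ F] at h2
    have e : ∑ a, ∑ b, gg (fun k => dd n (QQ n p a (G k))) (fun k => QQ n p b (F k)) =
        ∑ a, ∑ b, gg (fun k => QQ n p a (F k)) (fun k => dd n (QQ n p b (G k))) := by
      rw [Finset.sum_comm]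
      exact Finset.sum_congr rfl fun a _ => Finset.sum_congr rfl fun b _ => gg_comm _ _
    rw [e] at h2
    simp only [Finset.sum_add_distrib]
    linarith
  · have h1 := upper_aux F G (dd n) 6 (by norm_num) a b hF (fun f hf => QQ_stable hp a hf)
    have h2 := upper_aux G F (dd n) 6 (by norm_num) b a hG (fun f hf => QQ_stable hp b hf)
    rw [gg_comm _ F, gg_comm _ (fun k => QQ n p a (F k))] at h2
    linarith
  · exact lower_aux (p := p) F G LinearMap.id
  · have h1 := upper_aux F G LinearMap.id 1 (by norm_num) a b hF
      (fun f hf => by simpa using QQ_norm n p a f)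
    simp only [LinearMap.id_apply] at h1
    have := gg_nonneg F G
    linarith


/-- Theorem `thm:stable-2d`: the `L²`-orthogonal splitting
`S² = S₀₀ ⊕ S₀₁ ⊕ S₁₀ ⊕ S₁₁` is `H¹`-stable uniformly in `h` and `p`: there is a
constant `c > 0` independent of `h = 1/m` and `p` such that for every tensor product
spline `u ∈ S²` (with `Q_α u` the `L²(Ω)`-orthogonal projections onto `S_α`):
`c⁻¹|u|₁² ≤ Σ_α |Q_α u|₁² ≤ c|u|₁²`, and the same for the full `H¹` norm. -/
theorem stable_splitting_2d :
    ∃ c : ℝ, 0 < c ∧ ∀ m p : ℕ, 1 ≤ m → 1 ≤ p →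
      ∀ u : (Fin 2 → ℝ) → ℝ, u ∈ TensorSpline 2 m p →
      ∀ v : (Fin 2 → Bool) → (Fin 2 → ℝ) → ℝ,
        (∀ α, IsL2ProjSub 2 m p α u (v α)) →
        (c⁻¹ * h1semiSqD 2 u ≤ ∑ α : Fin 2 → Bool, h1semiSqD 2 (v α) ∧
          ∑ α : Fin 2 → Bool, h1semiSqD 2 (v α) ≤ c * h1semiSqD 2 u) ∧
        (c⁻¹ * h1normSqD 2 u ≤ ∑ α : Fin 2 → Bool, h1normSqD 2 (v α) ∧
          ∑ α : Fin 2 → Bool, h1normSqD 2 (v α) ≤ c * h1normSqD 2 u) := by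
  refine ⟨144, by norm_num, ?_⟩
  intro m p hm hp u hu v hv
  obtain ⟨n, rfl⟩ : ∃ n, m = n + 1 := ⟨m - 1, by omega⟩
  obtain ⟨ι, iι, F, G, hF, hG, rfl⟩ := span_rep (n := n) (fun _ => IsSpline (n + 1) p)
    (fun _ => MM n p) (fun _ _ h => spline_TF hp h) hu
  obtain ⟨h1, h2, h3, h4⟩ := main_aux hp F G hF hG
  have hs : ∑ α : Fin 2 → Bool, h1semiSqD 2 (v α) = ∑ a, ∑ b,
      h1semiSqD 2 (TT (fun k => QQ n p a (F k)) (fun k => QQ n p b (G k))) := by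
    rw [← sum_alpha]
    exact Finset.sum_congr rfl fun α _ => h1_congr (proj_eq hp α F G hF hG (hv α))
  have hl : ∑ α : Fin 2 → Bool, l2normSqD 2 (v α) = ∑ a, ∑ b,
      l2normSqD 2 (TT (fun k => QQ n p a (F k)) (fun k => QQ n p b (G k))) := by
    rw [← sum_alpha]
    exact Finset.sum_congr rfl fun α _ => l2_congr (proj_eq hp α F G hF hG (hv α))
  have hsn : 0 ≤ h1semiSqD 2 (TT F G) := by
    rw [TT_h1]; exact add_nonneg (gg_nonneg _ _) (gg_nonneg _ _)
  have hln : 0 ≤ l2normSqD 2 (TT F G) := by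
    rw [TT_l2]; exact gg_nonneg _ _
  rw [← hs] at h1
  rw [← hl] at h3
  have us : ∑ α : Fin 2 → Bool, h1semiSqD 2 (v α) ≤ 144 * h1semiSqD 2 (TT F G) := by
    rw [hs]
    simp only [Fintype.sum_bool]
    linarith [h2 true true, h2 true false, h2 false true, h2 false false]
  have ul : ∑ α : Fin 2 → Bool, l2normSqD 2 (v α) ≤ 144 * l2normSqD 2 (TT F G) := by
    rw [hl]
    simp only [Fintype.sum_bool]
    linarith [h4 true true, h4 true false, h4 false true, h4 false false]
  simp only [h1normSqD, Finset.sum_add_distrib]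
  refine ⟨⟨?_, us⟩, ?_, ?_⟩ <;> linarith

end SplineMG
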